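/- Let r > 0 and let g be holomorphic on the polydisc {(X,Y) ∈ ℂ² : |X| < r, |Y| < r} with g(0,0) = 0. Then for every c > 0, every ε ∈ (0, (π−ϖ)/2) and every n ∈ ℕ there exist R > 0 and K > 0 such that for every (z,ξ) ∈ ℂ* × ℂ with e^{−c} ≤ |z| ≤ e^{c}, |ξ| ≥ R and arg ξ ∈ [ε, π−ϖ−ε], the point Π(z,ξ) lies in the polydisc and |g(Π(z,ξ))| ≤ K/|ξ|ⁿ. -/

import Mathlib

open Complex

/-- The Serre map `Π(z,ξ) = (exp(2πiξ), z·exp(2πiτξ))`. -/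
noncomputable def PiMap (τ : ℂ) (p : ℂ × ℂ) : ℂ × ℂ :=
  (Complex.exp (2 * (Real.pi : ℂ) * Complex.I * p.2),
   p.1 * Complex.exp (2 * (Real.pi : ℂ) * Complex.I * τ * p.2))

/-- if `g` is holomorphic on the polydisc `{|X| < r, |Y| < r}` and vanishes at
the origin, then `g ∘ Π` is flat (decays faster than any power of `1/|ξ|`) on the sectorial
domains `e^{−c} ≤ |z| ≤ e^c`, `|ξ| ≥ R`, `arg ξ ∈ [ε, π − ϖ − ε]`, where `ϖ = arg τ`. -/
theorem statement4 (τ : ℂ) (hτ : 0 < τ.im) (r : ℝ) (hr : 0 < r)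
    (g : ℂ × ℂ → ℂ)
    (hg : DifferentiableOn ℂ g {w : ℂ × ℂ | ‖w.1‖ < r ∧ ‖w.2‖ < r})
    (hg0 : g (0, 0) = 0) :
    ∀ c : ℝ, 0 < c → ∀ ε : ℝ, 0 < ε → ε < (Real.pi - Complex.arg τ) / 2 → ∀ n : ℕ,
      ∃ R K : ℝ, 0 < R ∧ 0 < K ∧
        ∀ z ξ : ℂ, z ≠ 0 →
          Real.exp (-c) ≤ ‖z‖ → ‖z‖ ≤ Real.exp c →
          R ≤ ‖ξ‖ →
          ε ≤ Complex.arg ξ → Complex.arg ξ ≤ Real.pi - Complex.arg τ - ε →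
          PiMap τ (z, ξ) ∈ {w : ℂ × ℂ | ‖w.1‖ < r ∧ ‖w.2‖ < r} ∧
          ‖g (PiMap τ (z, ξ))‖ ≤ K / ‖ξ‖ ^ n := by
  intro c hc ε hε hε2 n
  have hτ0 : τ ≠ 0 := by
    rintro rfl
    simp at hτ
  have hτn : 0 < ‖τ‖ := norm_pos_iff.mpr hτ0
  have hargpos : 0 ≤ Complex.arg τ := Complex.arg_nonneg_iff.mpr hτ.le
  have hpi := Real.pi_pos
  have hsε : 0 < Real.sin ε := Real.sin_pos_of_pos_of_lt_pi hε (by linarith)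
  -- a linear bound for `g` near the origin
  have hnhds : {w : ℂ × ℂ | ‖w.1‖ < r ∧ ‖w.2‖ < r} ∈ nhds ((0, 0) : ℂ × ℂ) := by
    apply IsOpen.mem_nhds
    · exact (isOpen_lt continuous_fst.norm continuous_const).inter
        (isOpen_lt continuous_snd.norm continuous_const)
    · simp [hr]
  have hdiff : DifferentiableAt ℂ g (0, 0) := hg.differentiableAt hnhds
  obtain ⟨C, hC, hCb⟩ := hdiff.hasFDerivAt.isBigO_sub.exists_pos
  have hb := hCb.bound
  rw [Metric.eventually_nhds_iff] at hb
  obtain ⟨δ, hδ, hgb⟩ := hb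
  obtain ⟨s, hs, hs1, hs2⟩ : ∃ s : ℝ, 0 < s ∧ s ≤ 2 * Real.pi * Real.sin ε ∧
      s ≤ 2 * Real.pi * Real.sin ε * ‖τ‖ :=
    ⟨min (2 * Real.pi * Real.sin ε) (2 * Real.pi * Real.sin ε * ‖τ‖),
      lt_min (by positivity) (by positivity), min_le_left _ _, min_le_right _ _⟩
  have hlim : ∀ m : ℕ, Filter.Tendsto (fun x : ℝ => Real.exp c * (x ^ m * Real.exp (-s * x)))
      Filter.atTop (nhds 0) := by
    intro m
    have h := (tendsto_rpow_mul_exp_neg_mul_atTop_nhds_zero (m : ℝ) s hs).const_mul (Real.exp c)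
    simpa using h
  have e1 := (hlim 0).eventually (gt_mem_nhds (lt_min hr hδ))
  have e2 := (hlim n).eventually (gt_mem_nhds one_pos)
  obtain ⟨R, hR⟩ := Filter.eventually_atTop.mp (e1.and e2)
  refine ⟨max R 1, C, by positivity, hC, ?_⟩
  intro z ξ _ _ hz hξ ha1 ha2
  have hξ1 : 1 ≤ ‖ξ‖ := le_trans (le_max_right _ _) hξ
  have hξ0 : 0 < ‖ξ‖ := by linarith
  obtain ⟨h1, h2⟩ := hR ‖ξ‖ (le_trans (le_max_left _ _) hξ)
  have hsin : ∀ θ : ℝ, ε ≤ θ → θ ≤ Real.pi - ε → Real.sin ε ≤ Real.sin θ := by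
    intro θ h1 h2
    by_cases h : θ ≤ Real.pi / 2
    · exact Real.sin_le_sin_of_le_of_le_pi_div_two (by linarith) h h1
    · rw [← Real.sin_pi_sub θ]
      push Not at h
      exact Real.sin_le_sin_of_le_of_le_pi_div_two (by linarith) (by linarith) (by linarith)
  have him : Real.sin ε * ‖ξ‖ ≤ ξ.im := by
    rw [← Complex.norm_mul_sin_arg ξ, mul_comm]
    exact mul_le_mul_of_nonneg_left (hsin _ ha1 (by linarith)) hξ0.le
  have him2 : Real.sin ε * ‖τ‖ * ‖ξ‖ ≤ (τ * ξ).im := by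
    have : (τ * ξ).im = ‖τ‖ * ‖ξ‖ * Real.sin (Complex.arg τ + Complex.arg ξ) := by
      rw [Real.sin_add, Complex.mul_im]
      nth_rewrite 1 [← Complex.norm_mul_cos_arg τ, ← Complex.norm_mul_sin_arg ξ,
        ← Complex.norm_mul_sin_arg τ, ← Complex.norm_mul_cos_arg ξ]
      ring
    rw [this]
    have := mul_le_mul_of_nonneg_left (hsin (Complex.arg τ + Complex.arg ξ) (by linarith)
      (by linarith)) (mul_pos hτn hξ0).le
    linarith
  have hec : 1 ≤ Real.exp c := Real.one_le_exp hc.le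
  set M := Real.exp c * Real.exp (-s * ‖ξ‖) with hM
  have hx : ‖(PiMap τ (z, ξ)).1‖ ≤ M := by
    have : ‖(PiMap τ (z, ξ)).1‖ = Real.exp (-(2 * Real.pi * ξ.im)) := by
      simp [PiMap, Complex.norm_exp]
    rw [this]
    have h3 : Real.exp (-(2 * Real.pi * ξ.im)) ≤ Real.exp (-s * ‖ξ‖) := by
      apply Real.exp_le_exp.mpr
      nlinarith [mul_le_mul_of_nonneg_right hs1 hξ0.le]
    nlinarith [Real.exp_pos (-s * ‖ξ‖)]
  have hy : ‖(PiMap τ (z, ξ)).2‖ ≤ M := by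
    have : ‖(PiMap τ (z, ξ)).2‖ = ‖z‖ * Real.exp (-(2 * Real.pi * (τ * ξ).im)) := by
      have h : 2 * (Real.pi : ℂ) * Complex.I * τ * ξ
        = ((2 * Real.pi : ℝ) : ℂ) * (Complex.I * (τ * ξ)) := by push_cast; ring
      simp only [PiMap, norm_mul, Complex.norm_exp]
      rw [h, Complex.re_ofReal_mul, Complex.I_mul_re, mul_neg]
    rw [this]
    have h3 : Real.exp (-(2 * Real.pi * (τ * ξ).im)) ≤ Real.exp (-s * ‖ξ‖) := by
      apply Real.exp_le_exp.mpr
      nlinarith [mul_le_mul_of_nonneg_right hs2 hξ0.le]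
    exact mul_le_mul hz h3 (Real.exp_pos _).le (Real.exp_pos _).le
  have hMlt : M < min r δ := by simpa [hM] using h1
  have hMr : M < r := lt_of_lt_of_le hMlt (min_le_left _ _)
  have hMδ : M < δ := lt_of_lt_of_le hMlt (min_le_right _ _)
  have hnorm : ‖PiMap τ (z, ξ)‖ ≤ M := by
    rw [Prod.norm_def]
    exact max_le hx hy
  refine ⟨⟨lt_of_le_of_lt hx hMr, lt_of_le_of_lt hy hMr⟩, ?_⟩
  have h00 : ((0, 0) : ℂ × ℂ) = 0 := rfl
  have hfin := hgb (y := PiMap τ (z, ξ)) (by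
    rw [h00, dist_zero_right]
    exact lt_of_le_of_lt hnorm hMδ)
  rw [hg0, h00, sub_zero, sub_zero] at hfin
  have hpow : 0 < ‖ξ‖ ^ n := by positivity
  rw [le_div_iff₀ hpow]
  have h4 : M * ‖ξ‖ ^ n ≤ 1 := by
    rw [hM]
    linarith
  calc ‖g (PiMap τ (z, ξ))‖ * ‖ξ‖ ^ n ≤ (C * M) * ‖ξ‖ ^ n := by
        gcongr
        exact hfin.trans (mul_le_mul_of_nonneg_left hnorm hC.le)
    _ = C * (M * ‖ξ‖ ^ n) := by ring
    _ ≤ C * 1 := mul_le_mul_of_nonneg_left h4 hC.le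
    _ = C := mul_one C
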